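/- Let K be a field and p_T = ⟨P_1,…,P_l⟩ a prime ideal of K[T,Y] with p_T ∩ K[T] = {0}, and let d be the Krull dimension of K(T)[Y]/p̃_T, where p̃_T is the extension of p_T to K(T)[Y]. Then there exists a nonzero polynomial h ∈ K[T] such that for every t ∈ K^r with h(t) ≠ 0: the specialized ideal p_t = ⟨P_1(t,Y),…,P_l(t,Y)⟩ is a proper ideal of K[Y], and every minimal prime ideal q of K[Y] over p_t satisfies that the Krull dimension of K[Y]/q equals d (equivalently, every irreducible component of the zero set of p_t has dimension d). -/

import Mathlib

open MvPolynomial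

noncomputable section

/-- The rational function field `K(T)` with variables indexed by `ι`,
realized as the fraction field of the polynomial ring. -/
abbrev RatFuncField (K : Type) [Field K] (ι : Type) : Type := FractionRing (MvPolynomial ι K)

/-- `x ∈ K(T)` can be specialized at `t ∈ K^ι` with value `v`:
there is a representation `x = a/b` with `b(t) ≠ 0` and `v = a(t)/b(t)`. -/
def RatSpecializesTo (K : Type) [Field K] {ι : Type} (t : ι → K)
    (x : RatFuncField K ι) (v : K) : Prop :=
  ∃ a b : MvPolynomial ι K, MvPolynomial.eval t b ≠ 0 ∧
    algebraMap (MvPolynomial ι K) (RatFuncField K ι) b * x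
      = algebraMap (MvPolynomial ι K) (RatFuncField K ι) a ∧
    MvPolynomial.eval t b * v = MvPolynomial.eval t a

/-- `P ∈ K(T)[Y]` specializes at `t` (coefficientwise) to `q ∈ K[Y]`. -/
def PolySpecializesTo (K : Type) [Field K] {ι : Type} {s : ℕ} (t : ι → K)
    (P : MvPolynomial (Fin s) (RatFuncField K ι)) (q : MvPolynomial (Fin s) K) : Prop :=
  ∀ mono : Fin s →₀ ℕ, RatSpecializesTo K t (P.coeff mono) (q.coeff mono)

/-- `H` is a Hilbert subset of `K^ι`: the set of points where finitely many irreducible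
polynomials of `K(T)[Y]` specialize to irreducible polynomials of `K[Y]`, intersected
with a nonempty Zariski-open subset. -/
def IsHilbertSubset (K : Type) [Field K] (ι : Type) (H : Set (ι → K)) : Prop :=
  ∃ (s l n : ℕ) (p : Fin l → MvPolynomial (Fin s) (RatFuncField K ι))
    (g : Fin n → MvPolynomial ι K),
    (∀ i, Irreducible (p i)) ∧
    (∃ t : ι → K, ∃ j, MvPolynomial.eval t (g j) ≠ 0) ∧
    H = {t | (∃ j, MvPolynomial.eval t (g j) ≠ 0) ∧
      ∀ i, ∃ q : MvPolynomial (Fin s) K, PolySpecializesTo K t (p i) q ∧ Irreducible q}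

/-- A subset of `K^ι` is Zariski-dense iff for every nonzero polynomial `g` it contains a
point where `g` does not vanish. -/
def IsZariskiDense (K : Type) [Field K] {ι : Type} (S : Set (ι → K)) : Prop :=
  ∀ g : MvPolynomial ι K, g ≠ 0 → ∃ t ∈ S, MvPolynomial.eval t g ≠ 0

/-- A field is Hilbertian if all its Hilbert subsets (of all `K^r`, `r ≥ 1`) are
Zariski-dense. -/
def IsHilbertianField (K : Type) [Field K] : Prop :=
  ∀ r : ℕ, 0 < r → ∀ H : Set (Fin r → K), IsHilbertSubset K (Fin r) H → IsZariskiDense K H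

/-- The canonical ring homomorphism `K[T,Y] → K(T)[Y]`. -/
def extHom (K : Type) [Field K] (r s : ℕ) :
    MvPolynomial (Fin r ⊕ Fin s) K →+* MvPolynomial (Fin s) (RatFuncField K (Fin r)) :=
  MvPolynomial.eval₂Hom
    ((MvPolynomial.C).comp
      ((algebraMap (MvPolynomial (Fin r) K) (RatFuncField K (Fin r))).comp MvPolynomial.C))
    (Sum.elim
      (fun i => MvPolynomial.C
        (algebraMap (MvPolynomial (Fin r) K) (RatFuncField K (Fin r)) (MvPolynomial.X i)))
      (fun j => MvPolynomial.X j))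

/-- The specialization homomorphism `K[T,Y] → K[Y]`, `T ↦ t`. -/
def specHom (K : Type) [Field K] {r s : ℕ} (t : Fin r → K) :
    MvPolynomial (Fin r ⊕ Fin s) K →+* MvPolynomial (Fin s) K :=
  MvPolynomial.eval₂Hom MvPolynomial.C
    (Sum.elim (fun i => MvPolynomial.C (t i)) (fun j => MvPolynomial.X j))

/-- `L` is a separable extension of `F` in the general sense (equivalently, `L` is
linearly disjoint from the perfect closure of `F`, equivalently `L ⊗_F F̄` is reduced);
the extension is given by the ring homomorphism `f : F → L`. -/
def IsSepExtOfHom (F L : Type) [Field F] [CommRing L] (f : F →+* L) : Prop :=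
  letI : Algebra F L := f.toAlgebra
  IsReduced (TensorProduct F (AlgebraicClosure F) L)

/-- `Frac(A)` is a separable extension of `F` in the general sense. -/
def IsSepOverBase (F : Type) [Field F] (A : Type) [CommRing A] [Algebra F A] : Prop :=
  IsSepExtOfHom F (FractionRing A) ((algebraMap A (FractionRing A)).comp (algebraMap F A))

/-- The height of an ideal: the infimum over primes containing it of the lengths of
chains of primes below.  For a prime ideal this is the usual height. -/
def idealHeight {R : Type} [CommRing R] (I : Ideal R) : ℕ∞ :=
  ⨅ p : {q : PrimeSpectrum R // I ≤ q.asIdeal}, Order.height p.1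

/-- The monomials in `s` variables of total degree at most `D`. -/
def MonLE (s D : ℕ) : Type := {m : Fin s →₀ ℕ // m.degree ≤ D}

noncomputable instance (s D : ℕ) : Fintype (MonLE s D) :=
  (Finsupp.finite_of_degree_le D).fintype

/-- The generic polynomial of degree `D`, with parameter variables `v m`, `m` a monomial of
degree at most `D`, as an element of `K[Λ][Y]`. -/
def genPoly (K : Type) [Field K] (s D : ℕ) {Λ : Type} (v : MonLE s D → Λ) :
    MvPolynomial (Fin s) (MvPolynomial Λ K) :=
  ∑ m : MonLE s D, MvPolynomial.monomial m.1 (MvPolynomial.X (v m))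

/-- The generic polynomial of degree `D` specialized at `lam ∈ K^{N_D}`. -/
def genPolyAt (K : Type) [Field K] (s D : ℕ) (lam : MonLE s D → K) :
    MvPolynomial (Fin s) K :=
  ∑ m : MonLE s D, MvPolynomial.monomial m.1 (lam m)

/-- Substitution `T_i ↦ U_i(Y)` as a ring homomorphism `K[T,Y] → K[Y]`. -/
def polySubstHom (K : Type) [Field K] {r s : ℕ} (U : Fin r → MvPolynomial (Fin s) K) :
    MvPolynomial (Fin r ⊕ Fin s) K →+* MvPolynomial (Fin s) K :=
  MvPolynomial.eval₂Hom MvPolynomial.C (Sum.elim U (fun j => MvPolynomial.X j))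

/-- The quasi-generic polynomial `Q_{S,R}(Λ,Y) = ∑_i Λ_i Q_i(Y) + R(Y)` of base `(S,R)`,
where `S = {monomial (m 0), …, monomial (m n)}`, as an element of `K[Λ][Y]`. -/
def quasiGen (K : Type) [Field K] {s n : ℕ} (m : Fin (n + 1) → (Fin s →₀ ℕ))
    (R : MvPolynomial (Fin s) K) :
    MvPolynomial (Fin s) (MvPolynomial (Fin (n + 1)) K) :=
  (∑ i, MvPolynomial.monomial (m i) (MvPolynomial.X i)) +
    MvPolynomial.map (MvPolynomial.C) R

/-- Hypothesis (H) for the triple `(p, S, R)` (with `S` the set of monomials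
`monomial (m i)`, `m 0 = 0`): the map `φ_{S,R}` sending `(a_1,…,a_n)` to the class mod `E`
of `∑_{i ≥ 1} a_i Q_i(Y) + R(Y)` in `B/E` is not identically zero, where `B = K[Y]/p` and
`E ⊆ B` is the subfield of elements algebraic over `K`. -/
def HypothesisH (K : Type) [Field K] {s n : ℕ} (p : Ideal (MvPolynomial (Fin s) K))
    (m : Fin (n + 1) → (Fin s →₀ ℕ)) (R : MvPolynomial (Fin s) K) : Prop :=
  ∃ a : Fin (n + 1) → K,
    Ideal.Quotient.mk p ((∑ i ∈ Finset.univ.erase 0, MvPolynomial.monomial (m i) (a i)) + R)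
      ∉ integralClosure K (MvPolynomial (Fin s) K ⧸ p)

/-!
Let `A = K[T]` and `B = A[Y] ⧸ p`. Clearing denominators in a Noether normalization of the generic
fibre gives a nonzero `h ∈ A` and variables `X₁, …, Xₙ` such that `B[1/h]` is a domain integral over
`A[1/h][X₁, …, Xₙ]`; in particular `n` is the dimension of the generic fibre. As `A[1/h][X]` is
integrally closed, going-down holds for this extension. Let `m` be a maximal ideal of `A` not
containing `h`. By going-down, every minimal prime of the fibre `B ⧸ m B` lies over the prime
`m A[X]`, not merely over some prime containing it, so the corresponding component is integral over
`(A ⧸ m)[X₁, …, Xₙ]` and has dimension `n`.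
-/

/-- `R` is equidimensional of dimension `d`: `Spec R` is nonempty and all its irreducible components
have dimension `d`. Nonemptiness is imposed so that the zero ring is excluded. -/
def IsEquidimensionalOfDim (R : Type*) [CommRing R] (d : WithBot ℕ∞) : Prop :=
  Nontrivial R ∧ ∀ q ∈ minimalPrimes R, ringKrullDim (R ⧸ q) = d

/-- The isomorphism `R ⧸ φ⁻¹ J ≃ S ⧸ J` induced by a surjection `φ : R → S`, used to transport
dimensions of irreducible components along surjections. -/
def quotientComapEquivOfSurjective {R S : Type*} [CommRing R] [CommRing S] {φ : R →+* S}
    (hφ : Function.Surjective φ) (J : Ideal S) : (R ⧸ J.comap φ) ≃+* S ⧸ J :=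
  .ofBijective (Ideal.quotientMap J φ le_rfl)
    ⟨Ideal.quotientMap_injective, Ideal.quotientMap_surjective hφ⟩

theorem isEquidimensionalOfDim_iff_of_surjective {R S : Type*} [CommRing R] [CommRing S]
    {φ : R →+* S} (hφ : Function.Surjective φ) (d : WithBot ℕ∞) :
    IsEquidimensionalOfDim S d ↔
      RingHom.ker φ ≠ ⊤ ∧ ∀ q ∈ (RingHom.ker φ).minimalPrimes, ringKrullDim (R ⧸ q) = d := by
  have hdim (q : Ideal S) : ringKrullDim (R ⧸ q.comap φ) = ringKrullDim (S ⧸ q) :=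
    ringKrullDim_eq_of_ringEquiv (quotientComapEquivOfSurjective hφ q)
  rw [IsEquidimensionalOfDim, RingHom.ker_eq_comap_bot, minimalPrimes,
    Ideal.comap_minimalPrimes_eq_of_surjective hφ, ← RingHom.ker_eq_comap_bot,
    ← (RingHom.quotientKerEquivOfSurjective hφ).toEquiv.nontrivial_congr,
    Ideal.Quotient.nontrivial_iff]
  simp only [Set.forall_mem_image, hdim]

theorem isEquidimensionalOfDim_quotient_iff {R : Type*} [CommRing R] (I : Ideal R)
    (d : WithBot ℕ∞) :
    IsEquidimensionalOfDim (R ⧸ I) d ↔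
      I ≠ ⊤ ∧ ∀ q ∈ I.minimalPrimes, ringKrullDim (R ⧸ q) = d := by
  rw [isEquidimensionalOfDim_iff_of_surjective Ideal.Quotient.mk_surjective, Ideal.mk_ker]

theorem isEquidimensionalOfDim_congr {R S : Type*} [CommRing R] [CommRing S] (e : R ≃+* S)
    (d : WithBot ℕ∞) : IsEquidimensionalOfDim R d ↔ IsEquidimensionalOfDim S d := by
  rw [isEquidimensionalOfDim_iff_of_surjective (φ := (e : R →+* S)) e.surjective,
    isEquidimensionalOfDim_iff_of_surjective (φ := RingHom.id R) Function.surjective_id,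
    RingHom.ker_coe_equiv, (RingHom.injective_iff_ker_eq_bot _).1 Function.injective_id]

theorem ringKrullDim_eq_of_isIntegral (R S : Type*) [CommRing R] [CommRing S] [Algebra R S]
    [FaithfulSMul R S] [Algebra.IsIntegral R S] : ringKrullDim S = ringKrullDim R := by
  apply le_antisymm
  · exact Order.krullDim_le_of_strictMono (PrimeSpectrum.comap (algebraMap R S))
      fun _ _ h ↦ Ideal.IsIntegral.comap_lt_comap h
  · refine iSup_le fun c ↦ ?_
    obtain ⟨Q, _, _⟩ := Ideal.nonempty_primesOver (S := S) c.head.asIdeal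
    obtain ⟨C, hC, -⟩ := Ideal.exists_ltSeries_of_hasGoingUp c Q
    exact hC ▸ Order.LTSeries.length_le_krullDim C

theorem liesOver_of_mem_minimalPrimes_map {R S : Type*} [CommRing R] [CommRing S] [Algebra R S]
    [Algebra.HasGoingDown R S] {P : Ideal R} [P.IsPrime] {Q : Ideal S}
    (hQ : Q ∈ (P.map (algebraMap R S)).minimalPrimes) : Q.LiesOver P := by
  have := hQ.1.1
  obtain ⟨Q', hQ'Q, _, hQ'⟩ := Ideal.exists_ideal_le_liesOver_of_le (p := P) (q := Q.under R) Q
    (Ideal.map_le_iff_le_comap.1 hQ.1.2)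
  rwa [← (hQ.2 ⟨‹_›, Ideal.map_le_iff_le_comap.2 hQ'.over.le⟩ hQ'Q).antisymm hQ'Q] at hQ'

theorem isEquidimensionalOfDim_quotient_map {R S : Type*} [CommRing R] [CommRing S] [Algebra R S]
    [FaithfulSMul R S] [Algebra.IsIntegral R S] [Algebra.HasGoingDown R S]
    (P : Ideal R) [P.IsPrime] :
    IsEquidimensionalOfDim (S ⧸ P.map (algebraMap R S)) (ringKrullDim (R ⧸ P)) := by
  rw [isEquidimensionalOfDim_quotient_iff]
  refine ⟨fun htop ↦ ?_, fun Q hQ ↦ ?_⟩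
  · obtain ⟨Q, hQ, hQP⟩ := Ideal.nonempty_primesOver (S := S) P
    exact hQ.ne_top (top_le_iff.1 (htop ▸ Ideal.map_le_iff_le_comap.2 hQP.over.le))
  · have := liesOver_of_mem_minimalPrimes_map hQ
    exact ringKrullDim_eq_of_isIntegral (R ⧸ P) (S ⧸ Q)

instance isIntegrallyClosed_mvPolynomial (σ A : Type*) [Finite σ] [CommRing A] [IsDomain A]
    [IsIntegrallyClosed A] : IsIntegrallyClosed (MvPolynomial σ A) := by
  induction σ using Finite.induction_empty_option with
  | of_equiv e h => exact .of_equiv (renameEquiv A e).toRingEquiv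
  | h_empty => exact .of_equiv (isEmptyRingEquiv A PEmpty).symm
  | h_option h => exact .of_equiv (optionEquivLeft A _).symm.toRingEquiv

theorem ringKrullDim_mvPolynomial_quotient_map_C {A : Type*} [CommRing A] (m : Ideal A)
    [m.IsMaximal] (n : ℕ) :
    ringKrullDim (MvPolynomial (Fin n) A ⧸ m.map (C : A →+* MvPolynomial (Fin n) A)) = n := by
  let := Ideal.Quotient.field m
  rw [← ringKrullDim_eq_of_ringEquiv
    (quotientEquivQuotientMvPolynomial (σ := Fin n) m).toRingEquiv]
  simp

/-- The isomorphism `R ⧸ I ≃ M⁻¹R ⧸ M⁻¹I` when the elements of `M` are units modulo `I`: inverting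
`M` does not change the fibres over which `M` is invertible. -/
def quotientEquivOfIsLocalization {R : Type*} (S : Type*) [CommRing R] [CommRing S] [Algebra R S]
    (M : Submonoid R) [IsLocalization M S] (I : Ideal R)
    (hM : ∀ x ∈ M, IsUnit (Ideal.Quotient.mk I x)) :
    (R ⧸ I) ≃+* S ⧸ I.map (algebraMap R S) :=
  (IsLocalization.atUnits (R ⧸ I) (Algebra.algebraMapSubmonoid (R ⧸ I) M)
    (S := S ⧸ I.map (algebraMap R S)) (by rintro _ ⟨x, hx, rfl⟩; exact hM x hx)).toRingEquiv

/-- The isomorphism `(R ⧸ I) ⧸ ker φ ≃ S ⧸ φ I` induced by a surjection `φ : R → S`. With `φ` the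
reduction of coefficients it identifies a fibre of `A → A[Y] ⧸ p` with a specialization of `p`. -/
def quotientMapEquivOfSurjective {R S : Type*} [CommRing R] [CommRing S] {φ : R →+* S}
    (hφ : Function.Surjective φ) (I : Ideal R) :
    ((R ⧸ I) ⧸ (RingHom.ker φ).map (Ideal.Quotient.mk I)) ≃+* S ⧸ I.map φ :=
  (DoubleQuot.quotQuotEquivQuotSup I (RingHom.ker φ)).trans <|
    (Ideal.quotEquivOfEq (Ideal.comap_map_of_surjective' φ hφ I).symm).trans <|
    quotientComapEquivOfSurjective hφ (I.map φ)

theorem isIntegral_of_isUnit_smul {R S : Type*} [CommRing R] [CommRing S] [Algebra R S]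
    {u : R} (hu : IsUnit u) {x : S} (hx : IsIntegral R (u • x)) : IsIntegral R x := by
  obtain ⟨u, rfl⟩ := hu
  simpa [smul_smul] using hx.smul (↑u⁻¹ : R)

section
variable {R S : Type*} [CommRing R] [CommRing S] [Algebra R S]

theorem isIntegral_algebraMap_localization_of_smul {M : Submonoid R} {m : R} (hm : m ∈ M) {x : S}
    (hx : IsIntegral R (m • x)) :
    IsIntegral (Localization M)
      (algebraMap S (Localization (Algebra.algebraMapSubmonoid S M)) x) := by
  refine isIntegral_of_isUnit_smul (IsLocalization.map_units (Localization M) ⟨m, hm⟩) ?_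
  rw [algebraMap_smul, ← algebraMap.coe_smul]
  exact (hx.algebraMap (B := Localization (Algebra.algebraMapSubmonoid S M))).tower_top

theorem isIntegral_localization_of_adjoin_eq_top (M : Submonoid R) {t : Set S}
    (ht : Algebra.adjoin R t = ⊤) (h : ∀ x ∈ t, ∃ m ∈ M, IsIntegral R (m • x)) :
    Algebra.IsIntegral (Localization M) (Localization (Algebra.algebraMapSubmonoid S M)) := by
  have hS (x : S) : IsIntegral (Localization M)
      (algebraMap S (Localization (Algebra.algebraMapSubmonoid S M)) x) := by
    induction (ht ▸ trivial : x ∈ Algebra.adjoin R t) using Algebra.adjoin_induction with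
    | mem x hx =>
      obtain ⟨m, hm, hmx⟩ := h x hx
      exact isIntegral_algebraMap_localization_of_smul hm hmx
    | algebraMap r =>
      exact isIntegral_algebraMap_localization_of_smul M.one_mem
        (by simpa using isIntegral_algebraMap)
    | add x y _ _ hx hy => simpa using hx.add hy
    | mul x y _ _ hx hy => simpa using hx.mul hy
  refine ⟨fun z ↦ ?_⟩
  obtain ⟨⟨x, _, m, hm, rfl⟩, hz⟩ := IsLocalization.surj (Algebra.algebraMapSubmonoid S M) z
  refine isIntegral_of_isUnit_smul (IsLocalization.map_units (Localization M) ⟨m, hm⟩) ?_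
  have := hS x
  rw [← hz] at this
  simpa [Algebra.smul_def, mul_comm z, ← IsScalarTower.algebraMap_apply] using this

theorem exists_isIntegral_localization_powers (Rₘ Sₘ : Type*) [CommRing Rₘ] [CommRing Sₘ]
    [Algebra R Rₘ] [Algebra S Sₘ] [Algebra R Sₘ] [Algebra Rₘ Sₘ] [IsScalarTower R S Sₘ]
    [IsScalarTower R Rₘ Sₘ] (M : Submonoid R) [IsLocalization M Rₘ]
    [IsLocalization (Algebra.algebraMapSubmonoid S M) Sₘ] [Algebra.IsIntegral Rₘ Sₘ]
    [Algebra.FiniteType R S] :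
    ∃ a ∈ M, Algebra.IsIntegral (Localization (.powers a))
      (Localization (Algebra.algebraMapSubmonoid S (.powers a))) := by
  have hmul (x : S) : ∃ m ∈ M, IsIntegral R (m • x) := by
    obtain ⟨m, hm⟩ := (Algebra.IsIntegral.isIntegral (R := Rₘ)
      (algebraMap S Sₘ x)).exists_multiple_integral_of_isLocalization M
    obtain ⟨m', hm', hx⟩ := IsLocalization.exists_isIntegral_smul_of_isIntegral_map (Sₘ := Sₘ) M
      (x := (m : R) • x) (by rwa [← IsScalarTower.coe_toAlgHom' R S Sₘ, map_smul])
    exact ⟨m' * m, mul_mem hm' m.2, by rwa [mul_smul]⟩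
  obtain ⟨t, ht⟩ := Algebra.FiniteType.out (R := R) (A := S)
  choose m hmM hm using hmul
  refine ⟨∏ x ∈ t, m x, prod_mem fun x _ ↦ hmM x,
    isIntegral_localization_of_adjoin_eq_top _ ht fun x hx ↦ ⟨_, Submonoid.mem_powers _, ?_⟩⟩
  classical
  rw [← Finset.prod_erase_mul t m hx, mul_smul]
  exact (hm x).smul _

end

/-- The automorphism `X i ↦ c i • X i` of a polynomial ring, used to clear denominators in a Noether
normalization. -/
def scaleVariablesEquiv {σ R : Type*} [CommSemiring R] (c : σ → Rˣ) :
    MvPolynomial σ R ≃ₐ[R] MvPolynomial σ R :=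
  .ofAlgHom (aeval fun i ↦ (c i : R) • X i) (aeval fun i ↦ (↑(c i)⁻¹ : R) • X i)
    (by ext1 i; simp [smul_smul]) (by ext1 i; simp [smul_smul])

theorem exists_integral_inj_algHom_of_isFractionRing (A F B E : Type*) [CommRing A] [Field F]
    [Algebra A F] [IsFractionRing A F] [CommRing B] [Algebra A B] [CommRing E] [Nontrivial E]
    [Algebra A E] [Algebra F E] [Algebra B E] [IsScalarTower A F E] [IsScalarTower A B E]
    [IsLocalization (Algebra.algebraMapSubmonoid B (nonZeroDivisors A)) E]
    [Algebra.FiniteType F E] :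
    ∃ (n : ℕ) (g : MvPolynomial (Fin n) A →ₐ[A] B) (G : MvPolynomial (Fin n) F →ₐ[F] E),
      Function.Injective G ∧ G.IsIntegral ∧
        ∀ x, G (map (algebraMap A F) x) = algebraMap B E (g x) := by
  obtain ⟨n, G, hinj, hGint⟩ := exists_integral_inj_algHom_of_fg F E
  have hclear (i : Fin n) : ∃ (c : Fˣ) (w : B), (c : F) • G (X i) = algebraMap B E w := by
    obtain ⟨⟨w, _, a, ha, rfl⟩, hw⟩ :=
      IsLocalization.surj (Algebra.algebraMapSubmonoid B (nonZeroDivisors A)) (G (X i))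
    refine ⟨(IsLocalization.map_units F ⟨a, ha⟩).unit, w, ?_⟩
    rw [← hw, mul_comm, IsUnit.unit_spec, algebraMap_smul, Algebra.smul_def,
      ← IsScalarTower.algebraMap_apply]
  choose c w hw using hclear
  refine ⟨n, aeval w, G.comp (scaleVariablesEquiv c), hinj.comp (scaleVariablesEquiv c).injective,
    .trans _ _ (RingHom.isIntegral_of_surjective _ (scaleVariablesEquiv c).surjective) hGint,
    fun x ↦ ?_⟩
  induction x using MvPolynomial.induction_on with
  | C a => simp [← IsScalarTower.algebraMap_apply]
  | add x y hx hy => simp only [map_add, hx, hy]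
  | mul_X x i hx =>
    rw [map_mul, map_mul, hx, map_mul, map_mul]
    simp [scaleVariablesEquiv, hw]

theorem exists_isIntegral_localization_mvPolynomial (A F B E : Type*) [CommRing A] [Field F]
    [Algebra A F] [IsFractionRing A F] [CommRing B] [IsDomain B] [Algebra A B] [FaithfulSMul A B]
    [Algebra.FiniteType A B] [CommRing E] [Algebra A E] [Algebra F E] [Algebra B E]
    [IsScalarTower A F E] [IsScalarTower A B E]
    [IsLocalization (Algebra.algebraMapSubmonoid B (nonZeroDivisors A)) E] :
    ∃ (n : ℕ) (_ : Algebra (MvPolynomial (Fin n) A) B)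
      (_ : IsScalarTower A (MvPolynomial (Fin n) A) B), FaithfulSMul (MvPolynomial (Fin n) A) B ∧
      ringKrullDim E = n ∧ ∃ a : A, a ≠ 0 ∧
        let M := Submonoid.powers (C a : MvPolynomial (Fin n) A)
        Algebra.IsIntegral (Localization M)
          (Localization (Algebra.algebraMapSubmonoid B M)) := by
  have : IsDomain A := (IsFractionRing.injective A F).isDomain
  have hE : Algebra.algebraMapSubmonoid B (nonZeroDivisors A) ≤ nonZeroDivisors B :=
    algebraMapSubmonoid_le_nonZeroDivisors_of_faithfulSMul B le_rfl
  have hinjE : Function.Injective (algebraMap B E) := IsLocalization.injective E hE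
  have : Nontrivial E := hinjE.nontrivial
  have := (Algebra.isPushout_of_isLocalization (nonZeroDivisors A) F B E).symm
  have : Algebra.FiniteType F E := .equiv inferInstance (Algebra.IsPushout.equiv A F B E)
  obtain ⟨n, g, G, hinj, hGint, hcomm⟩ := exists_integral_inj_algHom_of_isFractionRing A F B E
  let := g.toAlgebra
  let := G.toAlgebra
  let := ((algebraMap B E).comp (algebraMap (MvPolynomial (Fin n) A) B)).toAlgebra
  have : Algebra.IsIntegral (MvPolynomial (Fin n) F) E := ⟨hGint⟩
  have : FaithfulSMul (MvPolynomial (Fin n) F) E :=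
    (faithfulSMul_iff_algebraMap_injective _ _).2 hinj
  have : IsScalarTower (MvPolynomial (Fin n) A) B E := .of_algebraMap_eq' rfl
  let := algebraMvPolynomial (σ := Fin n) (R := A) (S := F)
  have : IsScalarTower (MvPolynomial (Fin n) A) (MvPolynomial (Fin n) F) E :=
    .of_algebraMap_eq fun x ↦ (hcomm x).symm
  have : IsScalarTower A (MvPolynomial (Fin n) A) B :=
    .of_algebraMap_eq fun x ↦ (g.commutes x).symm
  let M := Algebra.algebraMapSubmonoid (MvPolynomial (Fin n) A) (nonZeroDivisors A)
  have : IsLocalization M (MvPolynomial (Fin n) F) := MvPolynomial.isLocalization _ F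
  have : IsLocalization (Algebra.algebraMapSubmonoid B M) E := by
    rwa [Algebra.algebraMapSubmonoid_map_map]
  have : Algebra.FiniteType (MvPolynomial (Fin n) A) B := .of_restrictScalars_finiteType A _ B
  obtain ⟨_, ⟨a, ha, rfl⟩, hMint⟩ :=
    exists_isIntegral_localization_powers (S := B) (MvPolynomial (Fin n) F) E M
  refine ⟨n, _, ‹_›, (faithfulSMul_iff_algebraMap_injective _ _).2 ?_, ?_, a,
    nonZeroDivisors.ne_zero ha, hMint⟩
  · refine Function.Injective.of_comp (f := algebraMap B E) ?_
    exact (funext hcomm : _ = algebraMap B E ∘ g) ▸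
      hinj.comp (map_injective _ (IsFractionRing.injective A F))
  · rw [ringKrullDim_eq_of_isIntegral (MvPolynomial (Fin n) F) E]
    simp

theorem isPrime_map_of_isUnit_mk {R : Type*} (Rₘ : Type*) [CommRing R] [CommRing Rₘ]
    [Algebra R Rₘ] (M : Submonoid R) [IsLocalization M Rₘ] (P : Ideal R) [P.IsPrime]
    (hM : ∀ x ∈ M, IsUnit (Ideal.Quotient.mk P x)) : (P.map (algebraMap R Rₘ)).IsPrime :=
  (Ideal.Quotient.isDomain_iff_prime _).1
    (quotientEquivOfIsLocalization Rₘ M P hM).symm.toMulEquiv.isDomain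

theorem isEquidimensionalOfDim_quotient_map_of_isLocalization {R S : Type*} (Rₘ Sₘ : Type*)
    [CommRing R] [CommRing S] [CommRing Rₘ] [CommRing Sₘ] [Algebra R S] [Algebra R Rₘ]
    [Algebra S Sₘ] [Algebra R Sₘ] [Algebra Rₘ Sₘ] [IsScalarTower R S Sₘ] [IsScalarTower R Rₘ Sₘ]
    (M : Submonoid R) [IsLocalization M Rₘ] [IsLocalization (Algebra.algebraMapSubmonoid S M) Sₘ]
    [FaithfulSMul Rₘ Sₘ] [Algebra.IsIntegral Rₘ Sₘ] [Algebra.HasGoingDown Rₘ Sₘ]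
    (P : Ideal R) [P.IsPrime] (hM : ∀ x ∈ M, IsUnit (Ideal.Quotient.mk P x)) :
    IsEquidimensionalOfDim (S ⧸ P.map (algebraMap R S)) (ringKrullDim (R ⧸ P)) := by
  have := isPrime_map_of_isUnit_mk Rₘ M P hM
  have hunit : ∀ y ∈ Algebra.algebraMapSubmonoid S M,
      IsUnit (Ideal.Quotient.mk (P.map (algebraMap R S)) y) := by
    rintro _ ⟨x, hx, rfl⟩
    exact (hM x hx).map (Ideal.quotientMap (P.map (algebraMap R S)) _ Ideal.le_comap_map)
  rw [isEquidimensionalOfDim_congr (quotientEquivOfIsLocalization Sₘ _ _ hunit), Ideal.map_map,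
    ← IsScalarTower.algebraMap_eq, IsScalarTower.algebraMap_eq R Rₘ Sₘ, ← Ideal.map_map,
    ringKrullDim_eq_of_ringEquiv (quotientEquivOfIsLocalization Rₘ M P hM)]
  exact isEquidimensionalOfDim_quotient_map _

theorem faithfulSMul_of_isLocalization {R S : Type*} (Rₘ Sₘ : Type*) [CommRing R] [CommRing S]
    [CommRing Rₘ] [CommRing Sₘ] [Algebra R S] [Algebra R Rₘ] [Algebra S Sₘ] [Algebra R Sₘ]
    [Algebra Rₘ Sₘ] [IsScalarTower R S Sₘ] [IsScalarTower R Rₘ Sₘ] (M : Submonoid R)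
    [IsLocalization M Rₘ] [IsLocalization (Algebra.algebraMapSubmonoid S M) Sₘ]
    [NoZeroDivisors S] [FaithfulSMul R S] (hM : M ≤ nonZeroDivisors R) : FaithfulSMul Rₘ Sₘ := by
  have : FaithfulSMul S Sₘ := (faithfulSMul_iff_algebraMap_injective _ _).2 <|
    IsLocalization.injective Sₘ (algebraMapSubmonoid_le_nonZeroDivisors_of_faithfulSMul S hM)
  have : FaithfulSMul R Sₘ := .trans R S Sₘ
  refine (faithfulSMul_iff_algebraMap_injective _ _).2 <|
    IsLocalization.injective_of_map_algebraMap_zero (M := M) Rₘ _ fun x hx ↦ ?_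
  rw [← IsScalarTower.algebraMap_apply, FaithfulSMul.algebraMap_eq_zero_iff] at hx
  rw [hx, map_zero]

theorem isEquidimensionalOfDim_quotient_map_of_isIntegral_localization {R S : Type*} [CommRing R]
    [IsIntegrallyClosed R] [CommRing S] [IsDomain S] [Algebra R S] [FaithfulSMul R S]
    (M : Submonoid R) [Algebra.IsIntegral (Localization M)
      (Localization (Algebra.algebraMapSubmonoid S M))]
    (P : Ideal R) [P.IsPrime] (hM : ∀ x ∈ M, IsUnit (Ideal.Quotient.mk P x)) :
    IsEquidimensionalOfDim (S ⧸ P.map (algebraMap R S)) (ringKrullDim (R ⧸ P)) := by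
  have h0 : 0 ∉ M := fun h ↦ not_isUnit_zero (map_zero (Ideal.Quotient.mk P) ▸ hM 0 h)
  have : IsDomain R := (FaithfulSMul.algebraMap_injective R S).isDomain
  have hM0 : M ≤ nonZeroDivisors R := le_nonZeroDivisors_of_noZeroDivisors h0
  have : IsDomain (Localization (Algebra.algebraMapSubmonoid S M)) :=
    IsLocalization.isDomain_localization
      (algebraMapSubmonoid_le_nonZeroDivisors_of_faithfulSMul S hM0)
  have : IsIntegrallyClosed (Localization M) := isIntegrallyClosed_of_isLocalization _ M hM0
  have : FaithfulSMul (Localization M) (Localization (Algebra.algebraMapSubmonoid S M)) :=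
    faithfulSMul_of_isLocalization (R := R) (S := S) _ _ M hM0
  exact isEquidimensionalOfDim_quotient_map_of_isLocalization (Localization M)
    (Localization (Algebra.algebraMapSubmonoid S M)) M P hM

theorem exists_isEquidimensionalOfDim_quotient_map (A F B E : Type*) [CommRing A]
    [IsIntegrallyClosed A] [Field F] [Algebra A F] [IsFractionRing A F] [CommRing B] [IsDomain B]
    [Algebra A B] [FaithfulSMul A B] [Algebra.FiniteType A B] [CommRing E] [Algebra A E]
    [Algebra F E] [Algebra B E] [IsScalarTower A F E] [IsScalarTower A B E]
    [IsLocalization (Algebra.algebraMapSubmonoid B (nonZeroDivisors A)) E] :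
    ∃ a : A, a ≠ 0 ∧ ∀ m : Ideal A, m.IsMaximal → a ∉ m →
      IsEquidimensionalOfDim (B ⧸ m.map (algebraMap A B)) (ringKrullDim E) := by
  have : IsDomain A := (FaithfulSMul.algebraMap_injective A B).isDomain
  obtain ⟨n, _, _, _, hdim, a, ha, _⟩ := exists_isIntegral_localization_mvPolynomial A F B E
  refine ⟨a, ha, fun m _ ham ↦ ?_⟩
  let := Ideal.Quotient.field m
  let P := m.map (C : A →+* MvPolynomial (Fin n) A)
  have hP : P.IsPrime := Ideal.Quotient.isDomain_iff_prime _ |>.1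
    (quotientEquivQuotientMvPolynomial m).symm.toMulEquiv.isDomain
  have haP : IsUnit (Ideal.Quotient.mk P (C a)) := by
    have : IsUnit (Ideal.Quotient.mk m a) := .mk0 _ (mt Ideal.Quotient.eq_zero_iff_mem.1 ham)
    exact this.map (Ideal.quotientMap P C Ideal.le_comap_map)
  have := isEquidimensionalOfDim_quotient_map_of_isIntegral_localization (S := B) (.powers (C a)) P
    (by rintro _ ⟨k, rfl⟩; simpa only [map_pow] using haP.pow k)
  rwa [Ideal.map_map, ← algebraMap_eq, ← IsScalarTower.algebraMap_eq,
    ringKrullDim_mvPolynomial_quotient_map_C, ← hdim] at this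

theorem exists_isEquidimensionalOfDim_mvPolynomial_quotient_map {A : Type*} (F : Type*) {σ : Type*}
    [CommRing A] [IsIntegrallyClosed A] [Field F] [Algebra A F] [IsFractionRing A F] [Finite σ]
    (p : Ideal (MvPolynomial σ A)) [p.IsPrime] (hp : p.comap C = ⊥) :
    ∃ a : A, a ≠ 0 ∧ ∀ {k : Type*} [Field k] (f : A →+* k), Function.Surjective f → f a ≠ 0 →
      IsEquidimensionalOfDim (MvPolynomial σ k ⧸ p.map (map f))
        (ringKrullDim (MvPolynomial σ F ⧸ p.map (map (algebraMap A F)))) := by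
  let := algebraMvPolynomial (σ := σ) (R := A) (S := F)
  let B := MvPolynomial σ A ⧸ p
  let E := MvPolynomial σ F ⧸ p.map (algebraMap (MvPolynomial σ A) (MvPolynomial σ F))
  have : FaithfulSMul A B := (faithfulSMul_iff_algebraMap_injective _ _).2 <|
    (RingHom.injective_iff_ker_eq_bot ((Ideal.Quotient.mk p).comp C)).2
      (by rw [← RingHom.comap_ker, Ideal.mk_ker, hp])
  let M := Algebra.algebraMapSubmonoid (MvPolynomial σ A) (nonZeroDivisors A)
  have : IsLocalization M (MvPolynomial σ F) := MvPolynomial.isLocalization _ F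
  have : IsLocalization (Algebra.algebraMapSubmonoid B (nonZeroDivisors A)) E := by
    have : IsLocalization (Algebra.algebraMapSubmonoid B M) E := inferInstance
    rwa [Algebra.algebraMapSubmonoid_map_map] at this
  have : IsScalarTower A (MvPolynomial σ A) (MvPolynomial σ F) :=
    .of_algebraMap_eq fun a ↦ (map_C _ a).symm
  have : IsScalarTower A B E := .to₁₃₄ A (MvPolynomial σ A) B E
  obtain ⟨a, ha, hfibre⟩ := exists_isEquidimensionalOfDim_quotient_map A F B E
  refine ⟨a, ha, fun {k} _ f hf hfa ↦ ?_⟩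
  have h := hfibre (RingHom.ker f) (RingHom.ker_isMaximal_of_surjective f hf) hfa
  have hker : (RingHom.ker (map f)).map (Ideal.Quotient.mk p) =
      (RingHom.ker f).map (algebraMap A B) := by
    rw [ker_map, Ideal.map_map]
    rfl
  let e : (B ⧸ (RingHom.ker (map f)).map (Ideal.Quotient.mk p)) ≃+*
      MvPolynomial σ k ⧸ p.map (map f) :=
    quotientMapEquivOfSurjective (map_surjective f hf) p
  exact (isEquidimensionalOfDim_congr e _).1 (hker ▸ h)

/-- The isomorphism `R[T, Y] ≃ R[T][Y]`, where `T` is indexed by `ι` and `Y` by `σ`. Mathlib's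
`sumRingEquiv` takes the left summand as the outer variables, hence the swap. -/
def sumCommRingEquiv (R ι σ : Type*) [CommSemiring R] :
    MvPolynomial (ι ⊕ σ) R ≃+* MvPolynomial σ (MvPolynomial ι R) :=
  (renameEquiv R (Equiv.sumComm ι σ)).toRingEquiv.trans (sumRingEquiv R σ ι)

theorem sumCommRingEquiv_rename_inl {R ι : Type*} (σ : Type*) [CommSemiring R]
    (g : MvPolynomial ι R) : sumCommRingEquiv R ι σ (rename Sum.inl g) = C g := by
  have : (sumCommRingEquiv R ι σ).toRingHom.comp (rename Sum.inl : _ →ₐ[R] _).toRingHom = C := by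
    ext <;> simp [sumCommRingEquiv]
  exact RingHom.congr_fun this g

theorem extHom_eq_map_comp (K : Type) [Field K] (r s : ℕ) : extHom K r s =
    (map (algebraMap (MvPolynomial (Fin r) K) (RatFuncField K (Fin r)))).comp
      (sumCommRingEquiv K (Fin r) (Fin s)).toRingHom := by
  ext i
  · simp [sumCommRingEquiv, extHom]
  · cases i <;> simp [sumCommRingEquiv, extHom]

theorem specHom_eq_map_comp (K : Type) [Field K] {r s : ℕ} (t : Fin r → K) :
    specHom K (s := s) t = (map (eval t)).comp (sumCommRingEquiv K (Fin r) (Fin s)).toRingHom := by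
  ext i
  · simp [sumCommRingEquiv, specHom]
  · cases i <;> simp [sumCommRingEquiv, specHom]

/-- (Equidimensionality of the specialized variety, via generic
flatness.) For `p_T = ⟨P_1,…,P_l⟩ ⊆ K[T,Y]` prime with `p_T ∩ K[T] = 0` and
`d = dim K(T)[Y]/p̃_T`, there is a nonzero `h ∈ K[T]` such that for all `t ∈ K^r` with
`h(t) ≠ 0`, the specialized ideal `p_t ⊆ K[Y]` is proper and every minimal prime `q` over
`p_t` satisfies `dim K[Y]/q = d`. -/
theorem stmt_18 (K : Type) [Field K] (r s l : ℕ)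
    (P : Fin l → MvPolynomial (Fin r ⊕ Fin s) K)
    (hprime : (Ideal.span (Set.range P)).IsPrime)
    (hcap : ∀ g : MvPolynomial (Fin r) K,
      MvPolynomial.rename Sum.inl g ∈ Ideal.span (Set.range P) → g = 0)
    (d : WithBot ℕ∞)
    (hd : ringKrullDim (MvPolynomial (Fin s) (RatFuncField K (Fin r)) ⧸
        Ideal.span (Set.range fun i => extHom K r s (P i))) = d) :
    ∃ h : MvPolynomial (Fin r) K, h ≠ 0 ∧
      ∀ t : Fin r → K, MvPolynomial.eval t h ≠ 0 →
        Ideal.span (Set.range fun i => specHom K t (P i)) ≠ ⊤ ∧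
        ∀ q ∈ (Ideal.span (Set.range fun i => specHom K t (P i))).minimalPrimes,
          ringKrullDim (MvPolynomial (Fin s) K ⧸ q) = d := by
  let e := sumCommRingEquiv K (Fin r) (Fin s)
  let p := (Ideal.span (Set.range P)).map e
  have : p.IsPrime := Ideal.map_isPrime_of_equiv e
  have hp : p.comap C = ⊥ := (Submodule.eq_bot_iff _).2 fun g hg ↦ hcap g <| by
    rwa [Ideal.mem_comap, ← sumCommRingEquiv_rename_inl, Ideal.apply_mem_of_equiv_iff] at hg
  have hspan (S : Type) [CommRing S] (φ : _ →+* S) :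
      Ideal.span (Set.range fun i ↦ φ.comp e.toRingHom (P i)) = p.map φ := by
    change _ = ((Ideal.span (Set.range P)).map e.toRingHom).map φ
    rw [Ideal.map_map, Ideal.map_span, ← Set.range_comp]
    rfl
  obtain ⟨h, hh, hfibre⟩ := exists_isEquidimensionalOfDim_mvPolynomial_quotient_map
    (RatFuncField K (Fin r)) p hp
  refine ⟨h, hh, fun t ht ↦ (isEquidimensionalOfDim_quotient_iff _ _).1 ?_⟩
  rw [← hd, extHom_eq_map_comp, specHom_eq_map_comp, hspan, hspan]
  exact hfibre (eval t) (fun c ↦ ⟨C c, eval_C c⟩) ht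

end
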